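/- If U ⊆ Σ(X,P) is such that S(X,P) ∪ U generates the monoid Σ(X,P), then U ∩ ℬ_i ≠ ∅ for every i with 1 ≤ i ≤ r−1. -/

import Mathlib

open Function Set

/-- The monoid (as a subset of `Function.End X`) of all transformations preserving
the partition induced by the equivalence relation `r`. -/
def TSet {X : Type*} (r : Setoid X) : Set (Function.End X) :=
  {f | ∀ x y : X, r x y → r (f x) (f y)}

/-- The group of units of `TSet r` (i.e. `S(X,P)`): the permutations `g` of `X` with
`x ∼ y ↔ g x ∼ g y`. -/
def SXP {X : Type*} (r : Setoid X) : Set (Function.End X) :=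
  {f | Function.Bijective f ∧ ∀ x y : X, r (f x) (f y) ↔ r x y}

/-- The submonoid (as a subset) of transformations preserving the partition whose
image meets every block of the partition. -/
def SigmaSet {X : Type*} (r : Setoid X) : Set (Function.End X) :=
  {f | f ∈ TSet r ∧ ∀ B ∈ Setoid.classes r, (Set.range f ∩ B).Nonempty}

/-- The number of blocks of the partition having size `s`. -/
noncomputable def blockCount {X : Type*} (r : Setoid X) (s : ℕ) : ℕ :=
  {B | B ∈ Setoid.classes r ∧ B.ncard = s}.ncard

/-- Membership in `ℬᵢ`, where `a = dᵢ` and `b = d_{i+1}` are consecutive distinct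
block sizes: `f ∈ Σ(X,P)`, and there are blocks `B, B'` of size `a` and `C, C'`
of size `b` such that `f` maps `B` injectively into `C`, maps `C'` onto `B'`, and
maps every other block bijectively onto a block of the same size. -/
def memB {X : Type*} (r : Setoid X) (a b : ℕ) (f : Function.End X) : Prop :=
  f ∈ SigmaSet r ∧
    ∃ B B' C C' : Set X,
      B ∈ Setoid.classes r ∧ B' ∈ Setoid.classes r ∧
      C ∈ Setoid.classes r ∧ C' ∈ Setoid.classes r ∧
      B.ncard = a ∧ B'.ncard = a ∧ C.ncard = b ∧ C'.ncard = b ∧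
      Set.InjOn f B ∧ f '' B ⊆ C ∧ f '' C' = B' ∧
      ∀ D ∈ Setoid.classes r, D ≠ B → D ≠ C' →
        ∃ E ∈ Setoid.classes r, f '' D = E ∧ Set.InjOn f D ∧ E.ncard = D.ncard

/-- Membership in `𝒞ᵢ`, where `s = dᵢ` is a block size: `f ∈ Σ(X,P)`, `f` maps
every block into a block of the same size, there is one block of size `s` whose
image under `f` has size `s - 1`, and `f` is injective on every other block. -/
def memC {X : Type*} (r : Setoid X) (s : ℕ) (f : Function.End X) : Prop :=
  f ∈ SigmaSet r ∧
    (∀ D ∈ Setoid.classes r, ∃ E ∈ Setoid.classes r, E.ncard = D.ncard ∧ f '' D ⊆ E) ∧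
    ∃ B ∈ Setoid.classes r, B.ncard = s ∧ (f '' B).ncard = s - 1 ∧
      ∀ D ∈ Setoid.classes r, D ≠ B → Set.InjOn f D

/-!
Every `f ∈ Σ(X,P)` permutes the finitely many blocks. Let `a < b` be consecutive block sizes, and
suppose that `f` changes the size of a block `p` of size `b`, takes at least `a` values on `p`, and
is injective on all other blocks. The induced permutation does not decrease the sizes of the blocks
other than `p`, so `p` goes to a block of size `a`, and this drop is compensated by a single rise,
of a block of size `a` to size `b`: thus `f` lies in `ℬ`. If `g * h` is such a map, then so is one
of `g` and `h`, possibly at another block of size `b`. No element of `S(X,P)` is such a map, but a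
map exchanging a block of size `a` and a block of size `b` is, so some element of `U` must be one.
-/

section Permutations

variable {Q α : Type*} [Finite Q]

theorem apply_perm_eq_of_forall_le [PartialOrder α] (σ : Equiv.Perm Q) {s : Q → α}
    (hs : ∀ q, s q ≤ s (σ q)) (q : Q) : s (σ q) = s q := by
  have hmono : Monotone fun n : ℕ ↦ s ((σ ^ n) q) :=
    monotone_nat_of_le_succ fun n ↦ by simpa only [pow_succ', Equiv.Perm.mul_apply] using hs _
  refine le_antisymm ?_ (hs q)
  simpa [pow_orderOf_eq_one] using hmono (orderOf_pos σ)

theorem exists_lt_le_apply_perm [LinearOrder α] (σ : Equiv.Perm Q) {s : Q → α} {b : α} {p : Q}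
    (hp : b ≤ s p) (hσp : s (σ p) < b) : ∃ q, s q < b ∧ b ≤ s (σ q) := by
  by_contra! hnone
  have hsymm : MapsTo σ.symm {q | b ≤ s q} {q | b ≤ s q} := fun q hq ↦
    not_lt.1 fun hlt ↦ (hnone _ hlt).not_ge (by simpa using hq)
  exact (Equiv.Perm.perm_symm_mapsTo_iff_mapsTo.1 hsymm hp).not_gt hσp

theorem exists_ascent_of_unique_descent [LinearOrder α] (σ : Equiv.Perm Q) {s : Q → α} {a : α}
    {p : Q} (hgap : ∀ q, s q < s p → s q ≤ a) (hle : ∀ q ≠ p, s q ≤ s (σ q))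
    (ha : a ≤ s (σ p)) (hne : s (σ p) ≠ s p) :
    s (σ p) = a ∧ ∃ q ≠ p, s q = a ∧ s (σ q) = s p ∧
      ∀ q' ≠ p, q' ≠ q → s (σ q') = s q' := by
  classical
  have hlt : s (σ p) < s p := by
    refine lt_of_not_ge fun hge ↦ hne (apply_perm_eq_of_forall_le σ (fun q ↦ ?_) p)
    rcases eq_or_ne q p with rfl | hq
    exacts [hge, hle q hq]
  obtain ⟨q, hq, hσq⟩ := exists_lt_le_apply_perm σ le_rfl hlt
  have hqp : q ≠ p := by rintro rfl; exact hq.false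
  -- Exchanging the images of `p` and `q` removes the only descent.
  have hswap : ∀ x, s ((σ * Equiv.swap p q) x) = s x := by
    refine apply_perm_eq_of_forall_le _ fun x ↦ ?_
    rcases eq_or_ne x p with rfl | hxp
    · simpa using hσq
    rcases eq_or_ne x q with rfl | hxq
    · simpa using (hgap x hq).trans ha
    · simpa [Equiv.swap_apply_of_ne_of_ne hxp hxq] using hle x hxp
  have hσp : s (σ p) = a := le_antisymm (hgap _ hlt) ha
  refine ⟨hσp, q, hqp, ?_, by simpa using hswap p, fun x hxp hxq ↦ ?_⟩
  · rw [← hσp]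
    simpa using (hswap q).symm
  · simpa [Equiv.swap_apply_of_ne_of_ne hxp hxq] using hswap x

end Permutations

section Blocks

variable {X : Type*} (r : Setoid X)

/-- The block of the partition that corresponds to a point of the quotient; blocks are indexed by
the quotient so that maps between them become maps of a type. -/
def block (q : Quotient r) : Set X := {x | Quotient.mk r x = q}

/-- The size of a block, with the value `0` for an infinite block. -/
noncomputable def blockSize (q : Quotient r) : ℕ := (block r q).ncard

@[simp]
theorem mem_block {q : Quotient r} {x : X} : x ∈ block r q ↔ Quotient.mk r x = q := Iff.rfl

theorem block_mk (x : X) : block r (Quotient.mk r x) = {y | r y x} :=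
  ext fun _ ↦ Quotient.eq

theorem range_block : range (block r) = r.classes := by
  ext B
  simp only [mem_range, Quotient.exists, block_mk, Setoid.classes, mem_ofPred_eq, eq_comm]

theorem block_mem_classes (q : Quotient r) : block r q ∈ r.classes :=
  range_block r ▸ mem_range_self q

theorem block_nonempty (q : Quotient r) : (block r q).Nonempty := q.exists_rep

theorem blockCount_ne_zero_iff [Finite X] {s : ℕ} :
    blockCount r s ≠ 0 ↔ ∃ q, blockSize r q = s := by
  rw [blockCount, ← pos_iff_ne_zero, ncard_pos, ← range_block]
  exact exists_range_iff

variable {r}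

theorem mem_sigmaSet_of_perm {f : Function.End X} (σ : Equiv.Perm (Quotient r))
    (hσ : ∀ x, Quotient.mk r (f x) = σ (Quotient.mk r x)) : f ∈ SigmaSet r := by
  refine ⟨fun x y hxy ↦ Quotient.exact ?_, ?_⟩
  · rw [hσ, hσ, Quotient.sound hxy]
  · rw [← range_block, forall_mem_range]
    intro q
    obtain ⟨x, hx⟩ := block_nonempty r (σ.symm q)
    exact ⟨f x, mem_range_self x, by rw [mem_block, hσ, hx, σ.apply_symm_apply]⟩

theorem surjective_quotient_map_of_mem_sigmaSet {f : Function.End X} (hf : f ∈ SigmaSet r) :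
    Surjective (Quotient.map f hf.1) := by
  intro q
  obtain ⟨_, ⟨x, rfl⟩, hx⟩ := hf.2 _ (block_mem_classes r q)
  exact ⟨Quotient.mk r x, hx⟩

/-- The permutation of the blocks induced by an element of `Σ(X,P)`. -/
noncomputable def blockPerm [Finite (Quotient r)] {f : Function.End X} (hf : f ∈ SigmaSet r) :
    Equiv.Perm (Quotient r) :=
  .ofBijective (Quotient.map f hf.1)
    (Finite.surjective_iff_bijective.1 (surjective_quotient_map_of_mem_sigmaSet hf))

@[simp]
theorem blockPerm_mk [Finite (Quotient r)] {f : Function.End X} (hf : f ∈ SigmaSet r) (x : X) :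
    blockPerm hf (Quotient.mk r x) = Quotient.mk r (f x) := rfl

theorem blockPerm_mul [Finite (Quotient r)] {f g : Function.End X} (hf : f ∈ SigmaSet r)
    (hg : g ∈ SigmaSet r) (hfg : f * g ∈ SigmaSet r) (q : Quotient r) :
    blockPerm hfg q = blockPerm hf (blockPerm hg q) := by
  induction q using Quotient.inductionOn
  rfl

theorem image_block_subset [Finite (Quotient r)] {f : Function.End X} (hf : f ∈ SigmaSet r)
    (q : Quotient r) : f '' block r q ⊆ block r (blockPerm hf q) := by
  rintro _ ⟨x, rfl, rfl⟩
  rfl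

variable [Finite X] {f g : Function.End X} {p q : Quotient r} {a : ℕ}

theorem ncard_image_block_le (hf : f ∈ SigmaSet r) (q : Quotient r) :
    (f '' block r q).ncard ≤ blockSize r (blockPerm hf q) :=
  ncard_le_ncard (image_block_subset hf q)

theorem image_block_eq (hf : f ∈ SigmaSet r)
    (h : blockSize r (blockPerm hf q) ≤ (f '' block r q).ncard) :
    f '' block r q = block r (blockPerm hf q) :=
  eq_of_subset_of_ncard_le (image_block_subset hf q) h

theorem blockSize_le_of_injOn (hf : f ∈ SigmaSet r) (hinj : InjOn f (block r q)) :
    blockSize r q ≤ blockSize r (blockPerm hf q) :=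
  hinj.ncard_image.symm.trans_le (ncard_image_block_le hf q)

theorem image_block_eq_of_injOn (hf : f ∈ SigmaSet r) (hinj : InjOn f (block r q))
    (h : blockSize r (blockPerm hf q) = blockSize r q) :
    f '' block r q = block r (blockPerm hf q) :=
  image_block_eq hf (h.trans hinj.ncard_image.symm).le

theorem blockSize_blockPerm_of_injective (hf : f ∈ SigmaSet r) (hinj : Injective f)
    (q : Quotient r) : blockSize r (blockPerm hf q) = blockSize r q :=
  apply_perm_eq_of_forall_le (s := blockSize r) _ (fun _ ↦ blockSize_le_of_injOn hf hinj.injOn) q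

variable (r f p a) in
/-- `f ∈ Σ(X,P)` changes the size of the block `p`, takes at least `a` values on it, and is
injective on all other blocks. When `a` is the block size just below that of `p`, these are the
elements of `ℬ` whose block `C'` is `p`; unlike the definition of `ℬ`, the conditions visibly pass
to one of the factors of a product. -/
structure LowersAt : Prop where
  mem_sigmaSet : f ∈ SigmaSet r
  injOn : ∀ q ≠ p, InjOn f (block r q)
  le_ncard_image : a ≤ (f '' block r p).ncard
  blockSize_ne : blockSize r (blockPerm mem_sigmaSet p) ≠ blockSize r p

namespace LowersAt

theorem not_injective (h : LowersAt r f p a) : ¬ Injective f := fun hinj ↦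
  h.blockSize_ne (blockSize_blockPerm_of_injective h.mem_sigmaSet hinj p)

theorem memB (h : LowersAt r f p a)
    (hgap : ∀ q, blockSize r q < blockSize r p → blockSize r q ≤ a) :
    memB r a (blockSize r p) f := by
  have hf := h.mem_sigmaSet
  obtain ⟨hp, q, hqp, hq, hσq, hrest⟩ := exists_ascent_of_unique_descent (blockPerm hf) hgap
    (fun q hq ↦ blockSize_le_of_injOn hf (h.injOn q hq))
    (h.le_ncard_image.trans (ncard_image_block_le hf p)) h.blockSize_ne
  refine ⟨hf, block r q, block r (blockPerm hf p), block r (blockPerm hf q), block r p,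
    block_mem_classes r _, block_mem_classes r _, block_mem_classes r _, block_mem_classes r _,
    hq, hp, hσq, rfl, h.injOn q hqp, image_block_subset hf q,
    image_block_eq hf (hp.trans_le h.le_ncard_image), ?_⟩
  rw [← range_block, forall_mem_range]
  intro q' hq'q hq'p
  have hinj : InjOn f (block r q') := h.injOn q' (ne_of_apply_ne _ hq'p)
  have hsize := hrest q' (ne_of_apply_ne _ hq'p) (ne_of_apply_ne _ hq'q)
  exact ⟨_, mem_range_self _, image_block_eq_of_injOn hf hinj hsize, hinj, hsize⟩

theorem of_mul (h : LowersAt r (f * g) p a) (hf : f ∈ SigmaSet r) (hg : g ∈ SigmaSet r) :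
    LowersAt r g p a ∨
      blockSize r (blockPerm hg p) = blockSize r p ∧ LowersAt r f (blockPerm hg p) a := by
  have himage (q : Quotient r) : (f * g) '' block r q = f '' (g '' block r q) := image_comp f g _
  have hginj (q) (hq : q ≠ p) : InjOn g (block r q) := (h.injOn q hq).of_comp
  by_cases hgp : blockSize r (blockPerm hg p) = blockSize r p
  swap
  · exact .inl ⟨hg, hginj, h.le_ncard_image.trans (himage p ▸ ncard_image_le), hgp⟩
  have hgsize : ∀ q, blockSize r (blockPerm hg q) = blockSize r q := by
    refine apply_perm_eq_of_forall_le _ fun q ↦ ?_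
    rcases eq_or_ne q p with rfl | hq
    exacts [hgp.ge, blockSize_le_of_injOn hg (hginj q hq)]
  refine .inr ⟨hgp, hf, fun q hq ↦ ?_, ?_, ?_⟩
  · obtain ⟨q, rfl⟩ := (blockPerm hg).surjective q
    have hqp : q ≠ p := ne_of_apply_ne _ hq
    rw [← image_block_eq_of_injOn hg (hginj q hqp) (hgsize q)]
    exact (h.injOn q hqp).image_of_comp
  · refine h.le_ncard_image.trans ?_
    rw [himage]
    exact ncard_le_ncard (image_mono (image_block_subset hg p))
  · rw [← blockPerm_mul hf hg h.mem_sigmaSet, hgp]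
    exact h.blockSize_ne

theorem exists_generator {U : Set (Function.End X)}
    (hclosure : (Submonoid.closure (SXP r ∪ U) : Set (Function.End X)) ⊆ SigmaSet r)
    (hf : f ∈ Submonoid.closure (SXP r ∪ U)) (h : LowersAt r f p a) :
    ∃ g ∈ U, ∃ q, blockSize r q = blockSize r p ∧ LowersAt r g q a := by
  induction hf using Submonoid.closure_induction generalizing p with
  | mem f hf =>
    rcases hf with hf | hf
    · exact absurd hf.1.injective h.not_injective
    · exact ⟨f, hf, p, rfl, h⟩
  | one => exact absurd injective_id h.not_injective
  | mul f g hf hg ihf ihg =>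
    rcases h.of_mul (hclosure hf) (hclosure hg) with h | ⟨hsize, h⟩
    · exact ihg h
    · rw [← hsize]
      exact ihf h

end LowersAt

end Blocks

section Exchange

theorem exists_leftInvOn_of_ncard_le {α β : Type*} {A : Set α} {C : Set β} (hA : A.Nonempty)
    (hfin : A.Finite) (hAC : A.ncard ≤ C.ncard) :
    ∃ (g : α → β) (h : β → α), MapsTo g A C ∧ MapsTo h C A ∧ LeftInvOn h g A := by
  classical
  obtain ⟨x, hx⟩ := hA
  have hCpos : C.ncard ≠ 0 := ((ncard_pos hfin).2 ⟨x, hx⟩ |>.trans_le hAC).ne'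
  have : Nonempty α := ⟨x⟩
  have : Nonempty β := (nonempty_of_ncard_ne_zero hCpos).to_type
  have hencard : A.encard ≤ C.encard := by
    rw [← hfin.cast_ncard_eq, ← (finite_of_ncard_ne_zero hCpos).cast_ncard_eq]
    exact_mod_cast hAC
  obtain ⟨g, hg, hinj⟩ := hfin.exists_injOn_of_encard_le hencard
  refine ⟨g, (g '' A).piecewise (invFunOn g A) (fun _ ↦ x), hg, fun c _ ↦ ?_, fun y hy ↦ ?_⟩
  · by_cases hc : c ∈ g '' A
    · simpa only [piecewise_eq_of_mem _ _ _ hc] using invFunOn_mem hc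
    · simpa only [piecewise_eq_of_notMem _ _ _ hc] using hx
  · rw [piecewise_eq_of_mem _ _ _ (mem_image_of_mem g hy), hinj.leftInvOn_invFunOn hy]

variable {X : Type*} {r : Setoid X} {p q : Quotient r}

open Classical in
/-- The map that acts as `g` on the block `p`, as `h` on the block `q`, and fixes all other points;
with `g` and `h` mapping these blocks into each other it is a map in `Σ(X,P)` that exchanges
them. -/
noncomputable def exchange (p q : Quotient r) (g h : X → X) : Function.End X :=
  (block r p).piecewise g ((block r q).piecewise h id)

variable {g h : X → X}

theorem eqOn_exchange_left : EqOn (exchange p q g h) g (block r p) := fun _ hx ↦ if_pos hx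

theorem eqOn_exchange_right (hpq : p ≠ q) : EqOn (exchange p q g h) h (block r q) := by
  rintro x rfl
  simp [exchange, Set.piecewise, hpq.symm]

theorem exchange_apply_of_ne {x : X} (hp : Quotient.mk r x ≠ p) (hq : Quotient.mk r x ≠ q) :
    exchange p q g h x = x := by
  simp [exchange, Set.piecewise, hp, hq]

theorem mk_exchange [DecidableEq (Quotient r)] (hpq : p ≠ q) (hg : MapsTo g (block r p) (block r q))
    (hh : MapsTo h (block r q) (block r p)) (x : X) :
    Quotient.mk r (exchange p q g h x) = Equiv.swap p q (Quotient.mk r x) := by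
  by_cases hp : Quotient.mk r x = p
  · rw [eqOn_exchange_left hp, hp, Equiv.swap_apply_left]
    exact hg hp
  by_cases hq : Quotient.mk r x = q
  · rw [eqOn_exchange_right hpq hq, hq, Equiv.swap_apply_right]
    exact hh hq
  · rw [exchange_apply_of_ne hp hq, Equiv.swap_apply_of_ne_of_ne hp hq]

theorem exists_lowersAt [Finite X] (hpq : blockSize r p < blockSize r q) :
    ∃ f, LowersAt r f q (blockSize r p) := by
  classical
  have hne : p ≠ q := ne_of_apply_ne _ hpq.ne
  obtain ⟨g, h, hg, hh, hleft⟩ :=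
    exists_leftInvOn_of_ncard_le (block_nonempty r p) (toFinite _) hpq.le
  have hmk := mk_exchange hne hg hh
  refine ⟨exchange p q g h, mem_sigmaSet_of_perm _ hmk, fun q' hq' ↦ ?_, ?_, ?_⟩
  · rcases eq_or_ne q' p with rfl | hp
    · exact hleft.injOn.congr eqOn_exchange_left.symm
    · refine (injOn_id _).congr ?_
      rintro x rfl
      exact (exchange_apply_of_ne hp hq').symm
  · rw [(eqOn_exchange_right hne).image_eq]
    exact ncard_le_ncard (hleft.surjOn hg)
  · obtain ⟨x, rfl⟩ := q.exists_rep
    rw [blockPerm_mk, hmk, Equiv.swap_apply_right]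
    exact hpq.ne

end Exchange

/-- (Here `d 1 < d 2 < … < d R` are the distinct block sizes
of the partition.)  If `U ⊆ Σ(X,P)` is such that `S(X,P) ∪ U` generates the
monoid `Σ(X,P)`, then `U ∩ ℬᵢ ≠ ∅` for every `1 ≤ i ≤ R - 1`. -/
theorem generators_meet_B {X : Type*} [Fintype X] [Nonempty X] (r : Setoid X)
    (R : ℕ) (d : ℕ → ℕ)
    (hdmono : ∀ i, 1 ≤ i → i + 1 ≤ R → d i < d (i + 1))
    (hdsizes : ∀ s, blockCount r s ≠ 0 ↔ ∃ i, 1 ≤ i ∧ i ≤ R ∧ d i = s)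
    (U : Set (Function.End X)) (hU : U ⊆ SigmaSet r)
    (hgen : (Submonoid.closure (SXP r ∪ U) : Set (Function.End X)) = SigmaSet r) :
    ∀ i, 1 ≤ i → i + 1 ≤ R → ∃ f ∈ U, memB r (d i) (d (i + 1)) f := by
  intro i hi hiR
  have hdstrict : StrictMonoOn d (Icc 1 R) :=
    strictMonoOn_of_lt_add_one ordConnected_Icc fun j _ hj hj' ↦ hdmono j hj.1 hj'.2
  have hi_mem : i ∈ Icc 1 R := ⟨hi, by omega⟩
  have hi_mem' : i + 1 ∈ Icc 1 R := ⟨by omega, hiR⟩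
  obtain ⟨p, hp⟩ := (blockCount_ne_zero_iff r).1 ((hdsizes (d i)).2 ⟨i, hi, hi_mem.2, rfl⟩)
  obtain ⟨q, hq⟩ := (blockCount_ne_zero_iff r).1
    ((hdsizes (d (i + 1))).2 ⟨i + 1, hi_mem'.1, hiR, rfl⟩)
  have hgap (t) (ht : blockSize r t < d (i + 1)) : blockSize r t ≤ d i := by
    obtain ⟨j, hj, hjR, hdj⟩ := (hdsizes _).1 ((blockCount_ne_zero_iff r).2 ⟨t, rfl⟩)
    rw [← hdj] at ht ⊢
    have hji : j < i + 1 := (hdstrict.lt_iff_lt ⟨hj, hjR⟩ hi_mem').1 ht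
    exact hdstrict.monotoneOn ⟨hj, hjR⟩ hi_mem (Nat.lt_succ_iff.1 hji)
  obtain ⟨f, hf⟩ : ∃ f, LowersAt r f q (d i) :=
    hp ▸ exists_lowersAt (by rw [hp, hq]; exact hdmono i hi hiR)
  obtain ⟨g, hgU, q', hq', hg⟩ := hf.exists_generator hgen.subset (hgen.superset hf.mem_sigmaSet)
  rw [← hq, ← hq'] at hgap ⊢
  exact ⟨g, hgU, hg.memB hgap⟩
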